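/- Assume the kernel K satisfies Assumption (K) with exponent γ ∈ (0,2], and that the coefficients b, σ are continuous in the space vari28able uniformly in time and have linear growth uniformly in time. Then for every N > 0 the sublevel set {φ ∈ C([0,T];ℝᵈ) : I(φ) ≤ N} of the rate function I is compact in C([0,T];ℝᵈ) equipped with the supremum norm. -/

import Mathlib

/-!
The proof combines weak compactness of balls in `L²` with the Arzelà–Ascoli theorem; the kernel
enters through its square integrability on `(0, T]`.

Extend every entry of `K` by zero outside `(0, T]` (`kerEntry`). The equation becomes
`φ_t = x₀ + ∫₀ᵀ K(t-s) F_s ds` with `F = b(·,φ) + σ(·,φ)v`, the convolution of two `L²` functions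
(`isCtrlSol_iff_coordSol`). Let `reachable E` be the set of paths that solve the equation for some
control with `∫|v|² ≤ E`.

* `reachable E` is bounded: after multiplication by `e^{-lt}` with `l` large, the kernel has small
  `L²` norm and the linear growth term is absorbed (`exists_volterra_bound`,
  `exists_apriori_bound`). Hence `F` is bounded in `L²`, and by Cauchy–Schwarz and continuity of
  translations in `L²(ℝ)` the paths are equicontinuous. So `reachable E` is relatively compact
  (`reachable_subset_isCompact`).
* `reachable E` is compact: along an ultrafilter on it, the paths converge uniformly and the controls
  converge weakly (`exists_weak_limit`). The coefficients then converge uniformly, so the equation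
  passes to the limit by weak-strong convergence (`tendsto_integral_weak_strong`,
  `isCompact_reachable`). Ultrafilters make separability of `L²` and subsequences unnecessary.
* `{I ≤ N}` is the intersection of `reachable (2(N + ε))` over `ε > 0`, so it is compact; the infimum
  defining `I` need not be shown to be attained.
-/

open MeasureTheory Set
open scoped ENNReal

/-- Frobenius norm of a real matrix. -/
noncomputable def frobNorm {n m : ℕ} (A : Matrix (Fin n) (Fin m) ℝ) : ℝ :=
  Real.sqrt (∑ i, ∑ j, (A i j) ^ 2)

/-- Euclidean norm of a vector in `ℝⁿ`. -/
noncomputable def euclNorm {n : ℕ} (x : Fin n → ℝ) : ℝ :=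
  Real.sqrt (∑ i, x i ^ 2)

/-- Assumption (K): the kernel is square integrable on `[0,T]` and there are constants
`C_K > 0` and `h₀ ∈ (0,1]` such that
`∫₀ʰ |K(t)|² dt + ∫₀ᵀ |K(t+h) - K(t)|² dt ≤ C_K h^γ` for all `h ∈ (0,h₀]`. -/
def AssumptionK {d : ℕ} (T γ : ℝ) (K : ℝ → Matrix (Fin d) (Fin d) ℝ) : Prop :=
  MeasureTheory.IntegrableOn (fun t => frobNorm (K t) ^ 2) (Set.Ioc 0 T) ∧
  ∃ C_K > (0:ℝ), ∃ h₀ ∈ Set.Ioc (0:ℝ) 1, ∀ h ∈ Set.Ioc (0:ℝ) h₀,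
    (∫ t in Set.Ioc 0 h, frobNorm (K t) ^ 2) +
        (∫ t in Set.Ioc 0 T, frobNorm (K (t + h) - K t) ^ 2) ≤ C_K * h ^ γ

/-- A continuous path `φ` is a solution of the controlled Volterra equation
`φ t = x₀ + ∫₀ᵗ K(t-s)[b(s,φ s) + σ(s,φ s) v s] ds` on `[0,T]`. -/
def IsCtrlSol {d m : ℕ} (T : ℝ) (K : ℝ → Matrix (Fin d) (Fin d) ℝ)
    (x₀ : Fin d → ℝ) (b : ℝ → (Fin d → ℝ) → Fin d → ℝ)
    (σ : ℝ → (Fin d → ℝ) → Matrix (Fin d) (Fin m) ℝ)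
    (v : ℝ → Fin m → ℝ) (φ : ℝ → Fin d → ℝ) : Prop :=
  ContinuousOn φ (Set.Icc 0 T) ∧
  ∀ t ∈ Set.Icc (0:ℝ) T,
    MeasureTheory.IntegrableOn
      (fun s => (K (t - s)).mulVec (b s (φ s) + (σ s (φ s)).mulVec (v s)))
      (Set.Ioc 0 t) ∧
    φ t = x₀ + ∫ s in Set.Ioc 0 t,
      (K (t - s)).mulVec (b s (φ s) + (σ s (φ s)).mulVec (v s))

/-- The large deviations rate function
`I(φ) = inf { (1/2)∫₀ᵀ |v|² : v ∈ L², φ solves the controlled Volterra equation with v }`,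
with `inf ∅ = +∞`, defined on `C([0,T];ℝᵈ)`. -/
noncomputable def rateI {d : ℕ} (m : ℕ) (T : ℝ) (K : ℝ → Matrix (Fin d) (Fin d) ℝ)
    (x₀ : Fin d → ℝ) (b : ℝ → (Fin d → ℝ) → Fin d → ℝ)
    (σ : ℝ → (Fin d → ℝ) → Matrix (Fin d) (Fin m) ℝ)
    (Φ : ContinuousMap (Set.Icc (0:ℝ) T) (Fin d → ℝ)) : ℝ≥0∞ :=
  sInf {E : ℝ≥0∞ | ∃ (φ : ℝ → Fin d → ℝ) (v : ℝ → Fin m → ℝ),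
    Measurable v ∧
    MeasureTheory.IntegrableOn (fun s => euclNorm (v s) ^ 2) (Set.Ioc 0 T) ∧
    IsCtrlSol T K x₀ b σ v φ ∧
    (∀ x : Set.Icc (0:ℝ) T, Φ x = φ ↑x) ∧
    E = ENNReal.ofReal (2⁻¹ * ∫ s in Set.Ioc 0 T, euclNorm (v s) ^ 2)}

open Filter Topology

/-! ### Square-integrable functions -/

lemma abs_integral_mul_le_sqrt {α : Type*} [MeasurableSpace α] {μ : Measure α} {f g : α → ℝ}
    (hf : MemLp f 2 μ) (hg : MemLp g 2 μ) :
    |∫ x, f x * g x ∂μ| ≤ √(∫ x, f x ^ 2 ∂μ) * √(∫ x, g x ^ 2 ∂μ) := by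
  have h := integral_mul_norm_le_Lp_mul_Lq (μ := μ) (f := f) (g := g) (p := 2) (q := 2)
    Real.HolderConjugate.two_two (by simpa using hf) (by simpa using hg)
  calc |∫ x, f x * g x ∂μ| ≤ ∫ x, |f x * g x| ∂μ := abs_integral_le_integral_abs
    _ = ∫ x, ‖f x‖ * ‖g x‖ ∂μ := by simp [abs_mul]
    _ ≤ _ := by
      rw [Real.sqrt_eq_rpow, Real.sqrt_eq_rpow]
      simpa using h

lemma sqrt_integral_comp_sub_le {f : ℝ → ℝ} (hf : MemLp f 2 volume) (A : Set ℝ) (t : ℝ) :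
    √(∫ s in A, f (t - s) ^ 2) ≤ √(∫ s, f s ^ 2) := by
  apply Real.sqrt_le_sqrt
  have h1 : Integrable (fun s => f (t - s) ^ 2) := hf.integrable_sq.comp_sub_left t
  calc ∫ s in A, f (t - s) ^ 2 ≤ ∫ s, f (t - s) ^ 2 :=
        setIntegral_le_integral h1 (Eventually.of_forall fun s => sq_nonneg _)
    _ = ∫ s, f s ^ 2 := integral_sub_left_eq_self (fun s => f s ^ 2) volume t

lemma memLp_comp_sub {f : ℝ → ℝ} (hf : MemLp f 2 volume) (t : ℝ) :
    MemLp (fun s => f (t - s)) 2 volume :=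
  hf.comp_measurePreserving (Measure.measurePreserving_sub_left volume t)

/-- Continuity of translations in `L²(ℝ)`, for the reflected translates `s ↦ f (t - s)`. -/
lemma tendsto_integral_sq_translate {f : ℝ → ℝ} (hf : MemLp f 2 volume) (t₀ : ℝ) :
    Tendsto (fun t => ∫ s, (f (t - s) - f (t₀ - s)) ^ 2) (𝓝 t₀) (𝓝 0) := by
  let G : C(ℝ, C(ℝ, ℝ)) := ContinuousMap.curry ⟨fun p : ℝ × ℝ => p.1 - p.2, by fun_prop⟩
  have hG : ∀ t, MeasurePreserving (G t) volume volume :=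
    fun t => Measure.measurePreserving_sub_left volume t
  have hc : Continuous fun t => Lp.compMeasurePreserving (G t) (hG t) (hf.toLp f) :=
    Continuous.compMeasurePreservingLp continuous_const G.continuous hG (by simp)
  have h0 : Tendsto (fun t => ‖Lp.compMeasurePreserving (G t) (hG t) (hf.toLp f) -
      Lp.compMeasurePreserving (G t₀) (hG t₀) (hf.toLp f)‖ ^ 2) (𝓝 t₀) (𝓝 0) := by
    have := ((hc.tendsto t₀).sub_const
      (Lp.compMeasurePreserving (G t₀) (hG t₀) (hf.toLp f))).norm.pow 2
    simpa using this
  refine h0.congr fun t => ?_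
  rw [← real_inner_self_eq_norm_sq, L2.inner_def]
  apply integral_congr_ae
  have e : ∀ t, ⇑(Lp.compMeasurePreserving (G t) (hG t) (hf.toLp f)) =ᵐ[volume]
      fun s => f (t - s) := fun t =>
    (Lp.coeFn_compMeasurePreserving _ (hG t)).trans
      ((hG t).quasiMeasurePreserving.ae_eq_comp hf.coeFn_toLp)
  filter_upwards [Lp.coeFn_sub (Lp.compMeasurePreserving (G t) (hG t) (hf.toLp f))
    (Lp.compMeasurePreserving (G t₀) (hG t₀) (hf.toLp f)), e t, e t₀] with s h1 h2 h3
  rw [h1, Pi.sub_apply, h2, h3]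
  simp [sq]

/-- Exponential weights make the `L²` norm of a function supported on `(0, ∞)` arbitrarily small. -/
lemma exists_exp_weight_small {f : ℝ → ℝ} (hf : MemLp f 2 volume) (h0 : ∀ s ≤ 0, f s = 0)
    {ε : ℝ} (hε : 0 < ε) :
    ∃ l : ℝ, 0 ≤ l ∧ MemLp (fun s => Real.exp (-l * s) * f s) 2 volume ∧
      √(∫ s, (Real.exp (-l * s) * f s) ^ 2) ≤ ε := by
  have hbd : ∀ l : ℝ, 0 ≤ l → ∀ s, |Real.exp (-l * s) * f s| ≤ |f s| := by
    intro l hl s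
    rcases le_or_gt s 0 with hs | hs
    · simp [h0 s hs]
    · rw [abs_mul, abs_of_pos (Real.exp_pos _)]
      refine mul_le_of_le_one_left (abs_nonneg _) (Real.exp_le_one_iff.2 ?_)
      nlinarith
  have hmeas : ∀ l : ℝ, AEStronglyMeasurable (fun s => Real.exp (-l * s) * f s) volume :=
    fun l => (by fun_prop : Continuous fun s => Real.exp (-l * s)).aestronglyMeasurable.mul hf.1
  have hlim : Tendsto (fun n : ℕ => ∫ s, (Real.exp (-(n : ℝ) * s) * f s) ^ 2) atTop
      (𝓝 (∫ _ : ℝ, (0 : ℝ))) := by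
    refine tendsto_integral_of_dominated_convergence (fun s => f s ^ 2)
      (fun n => (hmeas n).pow 2) hf.integrable_sq (fun n => Eventually.of_forall fun s => ?_)
      (Eventually.of_forall fun s => ?_)
    · rw [Real.norm_eq_abs, abs_pow, ← sq_abs (f s)]
      exact pow_le_pow_left₀ (abs_nonneg _) (hbd n n.cast_nonneg s) 2
    · rcases le_or_gt s 0 with hs | hs
      · simp [h0 s hs]
      · have : Tendsto (fun n : ℕ => Real.exp (-(n : ℝ) * s)) atTop (𝓝 0) := by
          refine Real.tendsto_exp_atBot.comp ?_
          have := (tendsto_natCast_atTop_atTop (R := ℝ)).atTop_mul_const hs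
          simp only [neg_mul]
          exact tendsto_neg_atTop_atBot.comp this
        simpa using (this.mul_const (f s)).pow 2
  simp only [integral_zero] at hlim
  obtain ⟨n, hn⟩ := (hlim.eventually (gt_mem_nhds (show (0 : ℝ) < ε ^ 2 by positivity))).exists
  refine ⟨n, n.cast_nonneg, MemLp.of_le hf (hmeas n)
    (Eventually.of_forall fun s => hbd n n.cast_nonneg s), ?_⟩
  exact Real.sqrt_le_iff.2 ⟨hε.le, hn.le⟩

/-! ### Weak compactness and Arzelà–Ascoli -/

lemma euclNorm_eq_norm {n : ℕ} (x : Fin n → ℝ) : euclNorm x = ‖WithLp.toLp 2 x‖ := by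
  simp [euclNorm, EuclideanSpace.norm_eq]

/-- Weak compactness of balls of `L²(μ; ℝᵐ)`, phrased for functions and along an ultrafilter:
a bounded family of controls has a weak limit in the same ball. -/
lemma exists_weak_limit {ι : Type*} (U : Ultrafilter ι) {m : ℕ} {μ : Measure ℝ}
    (V : ι → ℝ → Fin m → ℝ) (hV : ∀ a, Measurable (V a))
    (hVi : ∀ a, Integrable (fun s => euclNorm (V a s) ^ 2) μ) {R : ℝ}
    (hR : ∀ a, ∫ s, euclNorm (V a s) ^ 2 ∂μ ≤ R) :
    ∃ v : ℝ → Fin m → ℝ, Measurable v ∧ Integrable (fun s => euclNorm (v s) ^ 2) μ ∧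
      ∫ s, euclNorm (v s) ^ 2 ∂μ ≤ R ∧
      ∀ k, ∀ g : ℝ → ℝ, MemLp g 2 μ →
        Tendsto (fun a => ∫ s, g s * V a s k ∂μ) U (𝓝 (∫ s, g s * v s k ∂μ)) := by
  have hmem : ∀ a, MemLp (fun s => WithLp.toLp 2 (V a s)) 2 μ := by
    intro a
    have hm : Measurable fun s => WithLp.toLp 2 (V a s) :=
      (PiLp.continuous_toLp 2 _).measurable.comp (hV a)
    rw [memLp_two_iff_integrable_sq_norm hm.aestronglyMeasurable]
    simpa [euclNorm_eq_norm] using hVi a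
  have hnormsq : ∀ f : Lp (EuclideanSpace ℝ (Fin m)) 2 μ,
      ‖f‖ ^ 2 = ∫ s, ‖f s‖ ^ 2 ∂μ := by
    intro f
    rw [← real_inner_self_eq_norm_sq, L2.inner_def]
    simp
  have hR0 : ∀ a, ‖(hmem a).toLp‖ ≤ √R := by
    intro a
    refine Real.le_sqrt_of_sq_le ((hnormsq _).trans_le (le_trans (le_of_eq ?_) (hR a)))
    apply integral_congr_ae
    filter_upwards [(hmem a).coeFn_toLp] with s hs
    rw [hs, euclNorm_eq_norm]
  let L : ι → WeakDual ℝ (Lp (EuclideanSpace ℝ (Fin m)) 2 μ) := fun a =>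
    StrongDual.toWeakDual (InnerProductSpace.toDual ℝ _ (hmem a).toLp)
  have hcomp := WeakDual.isCompact_closedBall (𝕜 := ℝ)
    (0 : StrongDual ℝ (Lp (EuclideanSpace ℝ (Fin m)) 2 μ)) (√R)
  obtain ⟨ℓ, hℓ, hUℓ⟩ := hcomp.ultrafilter_le_nhds (U.map L) (by
    rw [le_principal_iff]
    refine Filter.mem_map.2 (Eventually.of_forall (f := (U : Filter ι)) fun a => ?_)
    simpa [L] using hR0 a)
  let w : Lp (EuclideanSpace ℝ (Fin m)) 2 μ :=
    (InnerProductSpace.toDual ℝ _).symm (WeakDual.toStrongDual ℓ)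
  have hw : ‖w‖ ≤ √R := by
    have : ‖WeakDual.toStrongDual ℓ‖ ≤ √R := by simpa using hℓ
    simpa [w] using this
  have hlim : ∀ G, Tendsto (fun a => inner ℝ (hmem a).toLp G) U (𝓝 (inner ℝ w G)) := by
    intro G
    have h1 : Tendsto L U (𝓝 ℓ) := hUℓ
    have h2 := ((WeakDual.eval_continuous G).tendsto ℓ).comp h1
    have h3 : inner ℝ w G = ℓ G := InnerProductSpace.toDual_symm_apply
    rw [h3]
    exact h2
  have hws : StronglyMeasurable (w : ℝ → EuclideanSpace ℝ (Fin m)) := Lp.stronglyMeasurable w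
  refine ⟨fun s => WithLp.ofLp (w s), (PiLp.continuous_ofLp 2 _).measurable.comp hws.measurable,
    ?_, ?_, ?_⟩
  · simpa [euclNorm_eq_norm] using
      (memLp_two_iff_integrable_sq_norm hws.aestronglyMeasurable).1 (Lp.memLp w)
  · have h0 : 0 ≤ R := by
      obtain ⟨a⟩ := U.nonempty_of_mem univ_mem |>.nonempty
      exact (integral_nonneg fun s => sq_nonneg _).trans (hR a)
    calc ∫ s, euclNorm (WithLp.ofLp (w s)) ^ 2 ∂μ = ‖w‖ ^ 2 := by
          rw [hnormsq]; simp [euclNorm_eq_norm]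
      _ ≤ √R ^ 2 := pow_le_pow_left₀ (norm_nonneg _) hw 2
      _ = R := Real.sq_sqrt h0
  · intro k g hg
    have hG : MemLp (fun s => g s • EuclideanSpace.single k (1 : ℝ)) 2 μ := by
      refine MemLp.of_le hg (hg.1.smul_const _) (Eventually.of_forall fun s => ?_)
      simp [norm_smul]
    have hinner : ∀ f : Lp (EuclideanSpace ℝ (Fin m)) 2 μ,
        inner ℝ f hG.toLp = ∫ s, g s * f s k ∂μ := by
      intro f
      rw [L2.inner_def]
      apply integral_congr_ae
      filter_upwards [hG.coeFn_toLp] with s hs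
      rw [hs, inner_smul_right, EuclideanSpace.inner_single_right]
      simp
    have := hlim hG.toLp
    rw [hinner w] at this
    refine this.congr fun a => ?_
    rw [hinner]
    apply integral_congr_ae
    filter_upwards [(hmem a).coeFn_toLp] with s hs
    rw [hs]

/-- Weak-strong convergence: coefficients that converge uniformly may be paired with weakly
convergent bounded controls. -/
lemma tendsto_integral_weak_strong {ι : Type*} {l : Filter ι} {μ : Measure ℝ} {p : ℝ → ℝ}
    (hp : MemLp p 2 μ) {a : ι → ℝ → ℝ} {a₀ : ℝ → ℝ} {w : ι → ℝ → ℝ} {w₀ : ℝ → ℝ} {R C : ℝ}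
    (ha : ∀ i, Measurable (a i)) (ha₀ : Measurable a₀) (hC : ∀ᵐ s ∂μ, |a₀ s| ≤ C)
    (haconv : ∀ ε > 0, ∀ᶠ i in l, ∀ᵐ s ∂μ, |a i s - a₀ s| ≤ ε)
    (hw : ∀ i, MemLp (w i) 2 μ) (hR : ∀ i, ∫ s, w i s ^ 2 ∂μ ≤ R)
    (hweak : ∀ g : ℝ → ℝ, MemLp g 2 μ →
      Tendsto (fun i => ∫ s, g s * w i s ∂μ) l (𝓝 (∫ s, g s * w₀ s ∂μ))) :
    Tendsto (fun i => ∫ s, p s * (a i s * w i s) ∂μ) l (𝓝 (∫ s, p s * (a₀ s * w₀ s) ∂μ)) := by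
  have hpa : MemLp (fun s => p s * a₀ s) 2 μ := by
    refine MemLp.of_le_mul (c := C) hp (hp.1.mul ha₀.aestronglyMeasurable) ?_
    filter_upwards [hC] with s hs
    rw [norm_mul, mul_comm]
    exact mul_le_mul_of_nonneg_right hs (norm_nonneg _)
  have h1 := hweak _ hpa
  have h2 : Tendsto (fun i => ∫ s, p s * (a i s * w i s) ∂μ - ∫ s, p s * a₀ s * w i s ∂μ) l
      (𝓝 0) := by
    rw [Metric.tendsto_nhds]
    intro ε hε
    set B := √(∫ s, p s ^ 2 ∂μ) * √R with hB
    have hB0 : 0 ≤ B := by positivity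
    have hη : 0 < ε / (B + 1) := by positivity
    filter_upwards [haconv _ hη] with i hi
    have hpd : MemLp (fun s => p s * (a i s - a₀ s)) 2 μ := by
      refine MemLp.of_le_mul (c := ε / (B + 1)) hp
        (hp.1.mul ((ha i).sub ha₀).aestronglyMeasurable) ?_
      filter_upwards [hi] with s hs
      rw [norm_mul, mul_comm]
      exact mul_le_mul_of_nonneg_right hs (norm_nonneg _)
    have e1 : ∫ s, p s * (a i s * w i s) ∂μ - ∫ s, p s * a₀ s * w i s ∂μ =
        ∫ s, p s * (a i s - a₀ s) * w i s ∂μ := by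
      have hi1 : Integrable (fun s => p s * (a i s - a₀ s) * w i s) μ :=
        hpd.integrable_mul (hw i)
      have hi2 : Integrable (fun s => p s * a₀ s * w i s) μ := hpa.integrable_mul (hw i)
      rw [sub_eq_iff_eq_add, ← integral_add hi1 hi2]
      congr 1; ext s; ring
    have e2 : √(∫ s, (p s * (a i s - a₀ s)) ^ 2 ∂μ) ≤ ε / (B + 1) * √(∫ s, p s ^ 2 ∂μ) := by
      rw [← Real.sqrt_sq hη.le, ← Real.sqrt_mul (sq_nonneg _), ← integral_const_mul]
      apply Real.sqrt_le_sqrt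
      refine integral_mono_ae hpd.integrable_sq (hp.integrable_sq.const_mul _) ?_
      filter_upwards [hi] with s hs
      have : (a i s - a₀ s) ^ 2 ≤ (ε / (B + 1)) ^ 2 := by
        rw [← sq_abs]; exact pow_le_pow_left₀ (abs_nonneg _) hs 2
      simp only [mul_pow]
      nlinarith [sq_nonneg (p s)]
    rw [e1, Real.dist_eq, sub_zero]
    calc |∫ s, p s * (a i s - a₀ s) * w i s ∂μ|
        ≤ √(∫ s, (p s * (a i s - a₀ s)) ^ 2 ∂μ) * √(∫ s, w i s ^ 2 ∂μ) :=
          abs_integral_mul_le_sqrt hpd (hw i)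
      _ ≤ (ε / (B + 1) * √(∫ s, p s ^ 2 ∂μ)) * √R :=
          mul_le_mul e2 (Real.sqrt_le_sqrt (hR i)) (Real.sqrt_nonneg _) (by positivity)
      _ = ε * (B / (B + 1)) := by rw [hB]; ring
      _ < ε := by
          refine mul_lt_of_lt_one_right hε ?_
          rw [div_lt_one (by positivity)]; linarith
  have h3 := h2.add h1
  simp only [sub_add_cancel, zero_add] at h3
  simpa only [mul_assoc] using h3

lemma subset_isCompact_of_equicontinuous {X : Type*} [TopologicalSpace X] [CompactSpace X] {d : ℕ}
    (S : Set C(X, Fin d → ℝ)) (M : ℝ) (hM : ∀ Φ ∈ S, ∀ x, ‖Φ x‖ ≤ M)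
    (heq : ∀ x₀, ∀ ε > 0, ∀ᶠ x in 𝓝 x₀, ∀ Φ ∈ S, dist (Φ x₀) (Φ x) < ε) :
    ∃ Q : Set C(X, Fin d → ℝ), IsCompact Q ∧ S ⊆ Q := by
  let e := ContinuousMap.isometryEquivBoundedOfCompact X (Fin d → ℝ)
  have hc : IsCompact (closure (e '' S)) := by
    refine BoundedContinuousFunction.arzela_ascoli (Metric.closedBall 0 M)
      (isCompact_closedBall _ _) _ ?_ ?_
    · rintro f x ⟨Φ, hΦ, rfl⟩
      rw [mem_closedBall_zero_iff]
      exact hM Φ hΦ x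
    · intro x₀
      rw [Metric.equicontinuousAt_iff_right]
      intro ε hε
      filter_upwards [heq x₀ ε hε] with x hx
      rintro ⟨f, Φ, hΦ, rfl⟩
      exact hx Φ hΦ
  refine ⟨e ⁻¹' closure (e '' S), ?_, fun Φ hΦ => subset_closure ⟨Φ, hΦ, rfl⟩⟩
  exact e.toHomeomorph.isCompact_preimage.2 hc

/-! ### A Gronwall bound for square-integrable Volterra kernels -/

/-- With `l` so large that the kernel `e^{-l·}k` has small `L²` norm, the maximum `S` of `e^{-lt}u(t)`
satisfies `S ≤ A + S / 2`. -/
lemma exists_volterra_bound {T : ℝ} (hT : 0 < T) {k : ℝ → ℝ} (hk : MemLp k 2 volume)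
    (hkpos : ∀ s, 0 ≤ k s) (hk0 : ∀ s ≤ 0, k s = 0) {A C R : ℝ} (hA : 0 ≤ A) (hC : 0 ≤ C)
    (hR : 0 ≤ R) :
    ∃ M : ℝ, ∀ u q : ℝ → ℝ, ContinuousOn u (Icc 0 T) → (∀ t, 0 ≤ u t) → (∀ s, 0 ≤ q s) →
      MemLp q 2 (volume.restrict (Ioc 0 T)) → √(∫ s in Ioc 0 T, q s ^ 2) ≤ R →
      (∀ t ∈ Icc 0 T, u t ≤ A + C * ∫ s in Ioc 0 T, k (t - s) * (u s * q s)) →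
      ∀ t ∈ Icc 0 T, u t ≤ M := by
  obtain ⟨l, hl, hkl, hle⟩ := exists_exp_weight_small hk hk0
    (ε := 1 / (2 * (C * R + 1))) (by positivity)
  refine ⟨Real.exp (l * T) * (2 * A), fun u q hu hu0 hq0 hq hqR hineq => ?_⟩
  have hgc : ContinuousOn (fun t => Real.exp (-l * t) * u t) (Icc 0 T) :=
    (by fun_prop : Continuous fun t => Real.exp (-l * t)).continuousOn.mul hu
  obtain ⟨t₁, ht₁, hmax⟩ := isCompact_Icc.exists_isMaxOn (nonempty_Icc.2 hT.le) hgc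
  set S := Real.exp (-l * t₁) * u t₁ with hS
  have hS0 : 0 ≤ S := mul_nonneg (Real.exp_pos _).le (hu0 _)
  have hmax' : ∀ t ∈ Icc 0 T, Real.exp (-l * t) * u t ≤ S := fun t ht => hmax ht
  have hS2 : S ≤ 2 * A := by
    have hkt := (memLp_comp_sub hkl t₁).restrict (Ioc 0 T)
    have hint : Integrable
        (fun s => Real.exp (-l * (t₁ - s)) * k (t₁ - s) * q s) (volume.restrict (Ioc 0 T)) :=
      hkt.integrable_mul hq
    have h1 : Real.exp (-l * t₁) * ∫ s in Ioc 0 T, k (t₁ - s) * (u s * q s) ≤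
        S * ∫ s in Ioc 0 T, Real.exp (-l * (t₁ - s)) * k (t₁ - s) * q s := by
      rw [← integral_const_mul, ← integral_const_mul]
      refine integral_mono_of_nonneg (Eventually.of_forall fun s => ?_) (hint.const_mul S) ?_
      · exact mul_nonneg (Real.exp_pos _).le
          (mul_nonneg (hkpos _) (mul_nonneg (hu0 _) (hq0 _)))
      · filter_upwards [ae_restrict_mem measurableSet_Ioc] with s hs
        have he : Real.exp (-l * t₁) = Real.exp (-l * (t₁ - s)) * Real.exp (-l * s) := by
          rw [← Real.exp_add]; congr 1; ring
        have hpos : 0 ≤ Real.exp (-l * (t₁ - s)) * k (t₁ - s) * q s :=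
          mul_nonneg (mul_nonneg (Real.exp_pos _).le (hkpos _)) (hq0 _)
        calc Real.exp (-l * t₁) * (k (t₁ - s) * (u s * q s))
            = (Real.exp (-l * s) * u s) * (Real.exp (-l * (t₁ - s)) * k (t₁ - s) * q s) := by
              rw [he]; ring
          _ ≤ _ := mul_le_mul_of_nonneg_right (hmax' s (Ioc_subset_Icc_self hs)) hpos
    have h2 : ∫ s in Ioc 0 T, Real.exp (-l * (t₁ - s)) * k (t₁ - s) * q s ≤
        1 / (2 * (C * R + 1)) * R := by
      refine (le_abs_self _).trans ((abs_integral_mul_le_sqrt hkt hq).trans ?_)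
      exact mul_le_mul ((sqrt_integral_comp_sub_le hkl _ t₁).trans hle) hqR
        (Real.sqrt_nonneg _) (by positivity)
    have h3 : S ≤ A + C * (S * (1 / (2 * (C * R + 1)) * R)) := by
      calc S ≤ Real.exp (-l * t₁) * (A + C * ∫ s in Ioc 0 T, k (t₁ - s) * (u s * q s)) :=
            mul_le_mul_of_nonneg_left (hineq t₁ ht₁) (Real.exp_pos _).le
        _ = Real.exp (-l * t₁) * A +
              C * (Real.exp (-l * t₁) * ∫ s in Ioc 0 T, k (t₁ - s) * (u s * q s)) := by ring
        _ ≤ A + C * (S * (1 / (2 * (C * R + 1)) * R)) := by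
            refine add_le_add (mul_le_of_le_one_left hA (Real.exp_le_one_iff.2 ?_))
              (mul_le_mul_of_nonneg_left (h1.trans (mul_le_mul_of_nonneg_left h2 hS0)) hC)
            nlinarith [ht₁.1]
    have h4 : C * (S * (1 / (2 * (C * R + 1)) * R)) = S / 2 * (C * R / (C * R + 1)) := by
      field_simp
    have h5 : S / 2 * (C * R / (C * R + 1)) ≤ S / 2 := by
      refine mul_le_of_le_one_right (by positivity) ?_
      rw [div_le_one (by positivity)]; linarith
    linarith
  intro t ht
  calc u t = Real.exp (l * t) * (Real.exp (-l * t) * u t) := by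
        rw [← mul_assoc, ← Real.exp_add]; simp
    _ ≤ Real.exp (l * T) * (2 * A) := by
        refine mul_le_mul (Real.exp_le_exp.2 (mul_le_mul_of_nonneg_left ht.2 hl))
          ((hmax' t ht).trans hS2) (mul_nonneg (Real.exp_pos _).le (hu0 _)) (Real.exp_pos _).le

/-! ### The controlled equation in coordinates -/

lemma sq_euclNorm {n : ℕ} (x : Fin n → ℝ) : euclNorm x ^ 2 = ∑ i, x i ^ 2 :=
  Real.sq_sqrt (Finset.sum_nonneg fun _ _ => sq_nonneg _)

lemma sq_frobNorm {n m : ℕ} (A : Matrix (Fin n) (Fin m) ℝ) :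
    frobNorm A ^ 2 = ∑ i, ∑ j, A i j ^ 2 :=
  Real.sq_sqrt (Finset.sum_nonneg fun _ _ => Finset.sum_nonneg fun _ _ => sq_nonneg _)

lemma euclNorm_nonneg {n : ℕ} (x : Fin n → ℝ) : 0 ≤ euclNorm x := Real.sqrt_nonneg _

lemma frobNorm_nonneg {n m : ℕ} (A : Matrix (Fin n) (Fin m) ℝ) : 0 ≤ frobNorm A :=
  Real.sqrt_nonneg _

lemma abs_apply_le_euclNorm {n : ℕ} (x : Fin n → ℝ) (i : Fin n) : |x i| ≤ euclNorm x := by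
  apply Real.abs_le_sqrt
  exact Finset.single_le_sum (f := fun i => x i ^ 2) (fun _ _ => sq_nonneg _) (Finset.mem_univ i)

lemma row_sq_le_frobNorm {n m : ℕ} (A : Matrix (Fin n) (Fin m) ℝ) (i : Fin n) :
    ∑ j, A i j ^ 2 ≤ frobNorm A ^ 2 := by
  rw [sq_frobNorm]
  exact Finset.single_le_sum (f := fun i => ∑ j, A i j ^ 2)
    (fun _ _ => Finset.sum_nonneg fun _ _ => sq_nonneg _) (Finset.mem_univ i)

lemma abs_entry_le_frobNorm {n m : ℕ} (A : Matrix (Fin n) (Fin m) ℝ) (i : Fin n) (j : Fin m) :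
    |A i j| ≤ frobNorm A :=
  (abs_apply_le_euclNorm (A i) j).trans
    (Real.sqrt_le_iff.2 ⟨frobNorm_nonneg A, row_sq_le_frobNorm A i⟩)

lemma abs_row_mul_le {n m : ℕ} (A : Matrix (Fin n) (Fin m) ℝ) (x : Fin m → ℝ) (i : Fin n) :
    |∑ k, A i k * x k| ≤ frobNorm A * euclNorm x := by
  apply abs_le_of_sq_le_sq _ (mul_nonneg (frobNorm_nonneg _) (euclNorm_nonneg _))
  rw [mul_pow, sq_euclNorm]
  exact (Finset.sum_mul_sq_le_sq_mul_sq _ _ _).trans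
    (mul_le_mul_of_nonneg_right (row_sq_le_frobNorm A i)
      (Finset.sum_nonneg fun _ _ => sq_nonneg _))

lemma euclNorm_le_card_mul_norm {n : ℕ} (x : Fin n → ℝ) : euclNorm x ≤ n * ‖x‖ := by
  refine Real.sqrt_le_iff.2 ⟨by positivity, ?_⟩
  calc ∑ i, x i ^ 2 ≤ ∑ _i : Fin n, ‖x‖ ^ 2 := by
        refine Finset.sum_le_sum fun i _ => ?_
        rw [← sq_abs]
        exact pow_le_pow_left₀ (abs_nonneg _) (norm_le_pi_norm x i) 2
    _ = n * ‖x‖ ^ 2 := by simp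
    _ ≤ (n * ‖x‖) ^ 2 := by
        rw [mul_pow]
        refine mul_le_mul_of_nonneg_right ?_ (sq_nonneg _)
        exact_mod_cast Nat.le_self_pow (by norm_num) n

lemma continuous_euclNorm {n : ℕ} : Continuous (euclNorm : (Fin n → ℝ) → ℝ) := by
  unfold euclNorm; fun_prop

/-- The `(i, j)` entry of the kernel, extended by zero outside `(0, T]`. With this extension the
Volterra integral over `(0, t]` becomes a convolution integral over the fixed interval `(0, T]`. -/
noncomputable def kerEntry {d : ℕ} (T : ℝ) (K : ℝ → Matrix (Fin d) (Fin d) ℝ) (i j : Fin d) :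
    ℝ → ℝ :=
  (Ioc 0 T).indicator fun t => K t i j

lemma kerEntry_memLp {d : ℕ} {T : ℝ} {K : ℝ → Matrix (Fin d) (Fin d) ℝ}
    (hKmeas : ∀ i j, Measurable fun t => K t i j)
    (hK : IntegrableOn (fun t => frobNorm (K t) ^ 2) (Ioc 0 T)) (i j : Fin d) :
    MemLp (kerEntry T K i j) 2 volume := by
  unfold kerEntry
  rw [memLp_indicator_iff_restrict measurableSet_Ioc,
    memLp_two_iff_integrable_sq (hKmeas i j).aestronglyMeasurable]
  refine Integrable.mono' hK ((hKmeas i j).pow_const 2).aestronglyMeasurable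
    (Eventually.of_forall fun s => ?_)
  rw [Real.norm_of_nonneg (sq_nonneg _), ← sq_abs]
  exact pow_le_pow_left₀ (abs_nonneg _) (abs_entry_le_frobNorm _ i j) 2

/-- The `j`-th coordinate of the integrand `b(s, φ_s) + σ(s, φ_s) v_s` that the kernel acts on. -/
noncomputable def forcing {d m : ℕ} (b : ℝ → (Fin d → ℝ) → Fin d → ℝ)
    (σ : ℝ → (Fin d → ℝ) → Matrix (Fin d) (Fin m) ℝ)
    (φ : ℝ → Fin d → ℝ) (v : ℝ → Fin m → ℝ) (j : Fin d) (s : ℝ) : ℝ :=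
  b s (φ s) j + ∑ k, σ s (φ s) j k * v s k

lemma forcing_eq {d m : ℕ} (b : ℝ → (Fin d → ℝ) → Fin d → ℝ)
    (σ : ℝ → (Fin d → ℝ) → Matrix (Fin d) (Fin m) ℝ)
    (φ : ℝ → Fin d → ℝ) (v : ℝ → Fin m → ℝ) (j : Fin d) (s : ℝ) :
    (b s (φ s) + (σ s (φ s)).mulVec (v s)) j = forcing b σ φ v j s := by
  simp [forcing, Matrix.mulVec, dotProduct]

lemma measurable_forcing {d m : ℕ} {b : ℝ → (Fin d → ℝ) → Fin d → ℝ}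
    {σ : ℝ → (Fin d → ℝ) → Matrix (Fin d) (Fin m) ℝ}
    (hbmeas : Measurable (Function.uncurry b))
    (hσmeas : ∀ i j, Measurable fun p : ℝ × (Fin d → ℝ) => σ p.1 p.2 i j)
    {φ : ℝ → Fin d → ℝ} {v : ℝ → Fin m → ℝ} (hφ : Measurable φ) (hv : Measurable v) (j : Fin d) :
    Measurable (forcing b σ φ v j) := by
  have hb : Measurable fun s => b s (φ s) := hbmeas.comp (measurable_id.prodMk hφ)
  have hs : ∀ k, Measurable fun s => σ s (φ s) j k :=
    fun k => (hσmeas j k).comp (measurable_id.prodMk hφ)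
  unfold forcing
  exact ((measurable_pi_apply j).comp hb).add
    (Finset.measurable_sum _ fun k _ => (hs k).mul ((measurable_pi_apply k).comp hv))

lemma abs_forcing_le {d m : ℕ} {T C_L : ℝ} {b : ℝ → (Fin d → ℝ) → Fin d → ℝ}
    {σ : ℝ → (Fin d → ℝ) → Matrix (Fin d) (Fin m) ℝ}
    (hgrowth : ∀ t ∈ Icc (0:ℝ) T, ∀ x,
      euclNorm (b t x) + frobNorm (σ t x) ≤ C_L * (1 + euclNorm x))
    (φ : ℝ → Fin d → ℝ) (v : ℝ → Fin m → ℝ) (j : Fin d) {s : ℝ} (hs : s ∈ Icc 0 T) :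
    |forcing b σ φ v j s| ≤ C_L * (1 + euclNorm (φ s)) * (1 + euclNorm (v s)) := by
  have h1 := abs_apply_le_euclNorm (b s (φ s)) j
  have h2 := abs_row_mul_le (σ s (φ s)) (v s) j
  have h3 := hgrowth s hs (φ s)
  have h4 := euclNorm_nonneg (b s (φ s))
  have h5 := frobNorm_nonneg (σ s (φ s))
  have h6 := euclNorm_nonneg (v s)
  calc |forcing b σ φ v j s| ≤ |b s (φ s) j| + |∑ k, σ s (φ s) j k * v s k| := abs_add_le _ _
    _ ≤ (euclNorm (b s (φ s)) + frobNorm (σ s (φ s))) * (1 + euclNorm (v s)) := by nlinarith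
    _ ≤ _ := mul_le_mul_of_nonneg_right h3 (by linarith)

lemma one_add_euclNorm_memLp {m : ℕ} {T : ℝ} (hT : 0 < T) {v : ℝ → Fin m → ℝ} (hv : Measurable v)
    (hvi : IntegrableOn (fun s => euclNorm (v s) ^ 2) (Ioc 0 T)) :
    MemLp (fun s => 1 + euclNorm (v s)) 2 (volume.restrict (Ioc 0 T)) ∧
      ∫ s in Ioc 0 T, (1 + euclNorm (v s)) ^ 2 ≤
        2 * T + 2 * ∫ s in Ioc 0 T, euclNorm (v s) ^ 2 := by
  have hm : Measurable fun s => euclNorm (v s) := continuous_euclNorm.measurable.comp hv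
  have h1 : MemLp (fun s => euclNorm (v s)) 2 (volume.restrict (Ioc 0 T)) :=
    (memLp_two_iff_integrable_sq hm.aestronglyMeasurable).2 hvi
  have h2 : MemLp (fun s => 1 + euclNorm (v s)) 2 (volume.restrict (Ioc 0 T)) :=
    (memLp_const (1 : ℝ)).add h1
  refine ⟨h2, ?_⟩
  have h3 : Integrable (fun s => (2 : ℝ) + 2 * euclNorm (v s) ^ 2) (volume.restrict (Ioc 0 T)) :=
    (integrable_const _).add (Integrable.const_mul hvi 2)
  calc ∫ s in Ioc 0 T, (1 + euclNorm (v s)) ^ 2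
      ≤ ∫ s in Ioc 0 T, ((2 : ℝ) + 2 * euclNorm (v s) ^ 2) := by
        refine integral_mono h2.integrable_sq h3 fun s => ?_
        simp only
        nlinarith [sq_nonneg (1 - euclNorm (v s))]
    _ = _ := by
        rw [integral_add (integrable_const _) (Integrable.const_mul hvi 2), integral_const_mul]
        simp [hT.le, mul_comm]

lemma forcing_memLp {d m : ℕ} {T C_L M : ℝ} (hT : 0 < T) (hCL : 0 < C_L)
    {b : ℝ → (Fin d → ℝ) → Fin d → ℝ}
    {σ : ℝ → (Fin d → ℝ) → Matrix (Fin d) (Fin m) ℝ}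
    (hbmeas : Measurable (Function.uncurry b))
    (hσmeas : ∀ i j, Measurable fun p : ℝ × (Fin d → ℝ) => σ p.1 p.2 i j)
    (hgrowth : ∀ t ∈ Icc (0:ℝ) T, ∀ x,
      euclNorm (b t x) + frobNorm (σ t x) ≤ C_L * (1 + euclNorm x))
    {φ : ℝ → Fin d → ℝ} {v : ℝ → Fin m → ℝ} (hφ : Measurable φ) (hv : Measurable v)
    (hvi : IntegrableOn (fun s => euclNorm (v s) ^ 2) (Ioc 0 T))
    (hM : ∀ s ∈ Icc 0 T, 1 + euclNorm (φ s) ≤ M) (j : Fin d) :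
    MemLp (forcing b σ φ v j) 2 (volume.restrict (Ioc 0 T)) ∧
      ∫ s in Ioc 0 T, forcing b σ φ v j s ^ 2 ≤
        (C_L * M) ^ 2 * (2 * T + 2 * ∫ s in Ioc 0 T, euclNorm (v s) ^ 2) := by
  obtain ⟨h1, h2⟩ := one_add_euclNorm_memLp hT hv hvi
  have hb : ∀ s ∈ Ioc 0 T, |forcing b σ φ v j s| ≤ C_L * M * (1 + euclNorm (v s)) := by
    intro s hs
    have h3 := Ioc_subset_Icc_self hs
    refine (abs_forcing_le hgrowth φ v j h3).trans ?_
    have := euclNorm_nonneg (v s)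
    exact mul_le_mul_of_nonneg_right (mul_le_mul_of_nonneg_left (hM s h3) hCL.le) (by linarith)
  have h3 : MemLp (forcing b σ φ v j) 2 (volume.restrict (Ioc 0 T)) := by
    refine MemLp.of_le_mul (c := C_L * M) h1
      (measurable_forcing hbmeas hσmeas hφ hv j).aestronglyMeasurable ?_
    filter_upwards [ae_restrict_mem measurableSet_Ioc] with s hs
    rw [Real.norm_of_nonneg (show 0 ≤ 1 + euclNorm (v s) by linarith [euclNorm_nonneg (v s)])]
    exact hb s hs
  refine ⟨h3, ?_⟩
  calc ∫ s in Ioc 0 T, forcing b σ φ v j s ^ 2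
      ≤ ∫ s in Ioc 0 T, (C_L * M) ^ 2 * (1 + euclNorm (v s)) ^ 2 := by
        refine setIntegral_mono_on h3.integrable_sq (h1.integrable_sq.const_mul _)
          measurableSet_Ioc fun s hs => ?_
        rw [← mul_pow, ← sq_abs]
        exact pow_le_pow_left₀ (abs_nonneg _) (hb s hs) 2
    _ ≤ _ := by
        rw [integral_const_mul]
        exact mul_le_mul_of_nonneg_left h2 (sq_nonneg _)

/-- For a square-integrable integrand the Volterra integral exists at every time, and its coordinates are
convolutions over `(0, T]` with the extended kernel. -/
lemma integral_mulVec_eq {d : ℕ} {T : ℝ} {K : ℝ → Matrix (Fin d) (Fin d) ℝ}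
    (hKmeas : ∀ i j, Measurable fun t => K t i j)
    (hK : IntegrableOn (fun t => frobNorm (K t) ^ 2) (Ioc 0 T))
    {F : ℝ → Fin d → ℝ} (hF : ∀ j, MemLp (fun s => F s j) 2 (volume.restrict (Ioc 0 T)))
    {t : ℝ} (ht : t ∈ Icc 0 T) :
    IntegrableOn (fun s => (K (t - s)).mulVec (F s)) (Ioc 0 t) ∧
      ∀ i, (∫ s in Ioc 0 t, (K (t - s)).mulVec (F s)) i =
        ∑ j, ∫ s in Ioc 0 T, kerEntry T K i j (t - s) * F s j := by
  have hint : ∀ i j, IntegrableOn (fun s => kerEntry T K i j (t - s) * F s j) (Ioc 0 T) :=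
    fun i j => ((memLp_comp_sub (kerEntry_memLp hKmeas hK i j) t).restrict _).integrable_mul (hF j)
  have hsub : Ioo 0 t ⊆ Ioc 0 T := fun s hs => ⟨hs.1, hs.2.le.trans ht.2⟩
  have heq : ∀ i j, EqOn (fun s => kerEntry T K i j (t - s) * F s j)
      (fun s => K (t - s) i j * F s j) (Ioo 0 t) := by
    intro i j s hs
    have : t - s ∈ Ioc 0 T := ⟨by linarith [hs.2], by linarith [hs.1, ht.2]⟩
    simp [kerEntry, indicator_of_mem this]
  have hint' : ∀ i j, IntegrableOn (fun s => K (t - s) i j * F s j) (Ioc 0 t) := by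
    intro i j
    rw [integrableOn_Ioc_iff_integrableOn_Ioo]
    exact ((hint i j).mono_set hsub).congr_fun (heq i j) measurableSet_Ioo
  have hI : ∀ i, Integrable (fun s => (K (t - s)).mulVec (F s) i) (volume.restrict (Ioc 0 t)) := by
    intro i
    simp only [Matrix.mulVec, dotProduct]
    exact integrable_finsetSum _ fun j _ => hint' i j
  refine ⟨Integrable.of_eval hI, fun i => ?_⟩
  rw [eval_integral hI]
  simp only [Matrix.mulVec, dotProduct]
  rw [integral_finsetSum _ fun j _ => hint' i j]
  refine Finset.sum_congr rfl fun j _ => ?_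
  rw [integral_Ioc_eq_integral_Ioo, ← setIntegral_congr_fun measurableSet_Ioo (heq i j)]
  refine (setIntegral_eq_of_subset_of_forall_sdiff_eq_zero measurableSet_Ioc hsub ?_).symm
  intro s hs
  have : t - s ∉ Ioc 0 T := fun h => hs.2 ⟨hs.1.1, by linarith [h.1]⟩
  simp [kerEntry, indicator_of_notMem this]

/-- The controlled Volterra equation written in coordinates, with the kernel extended by zero and all
integrals taken over the whole of `(0, T]`. -/
def CoordSol {d m : ℕ} (T : ℝ) (K : ℝ → Matrix (Fin d) (Fin d) ℝ)
    (x₀ : Fin d → ℝ) (b : ℝ → (Fin d → ℝ) → Fin d → ℝ)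
    (σ : ℝ → (Fin d → ℝ) → Matrix (Fin d) (Fin m) ℝ)
    (v : ℝ → Fin m → ℝ) (φ : ℝ → Fin d → ℝ) : Prop :=
  ∀ t ∈ Icc (0:ℝ) T, ∀ i,
    φ t i = x₀ i + ∑ j, ∫ s in Ioc 0 T, kerEntry T K i j (t - s) * forcing b σ φ v j s

lemma exists_bound_of_continuous {d : ℕ} (T : ℝ) {φ : ℝ → Fin d → ℝ} (hφ : Continuous φ) :
    ∃ M, ∀ s ∈ Icc 0 T, 1 + euclNorm (φ s) ≤ M := by
  obtain ⟨M, hM⟩ := isCompact_Icc.bddAbove_image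
    ((continuous_const.add (continuous_euclNorm.comp hφ)).continuousOn (s := Icc 0 T)
      (f := fun s => 1 + euclNorm (φ s)))
  exact ⟨M, fun s hs => hM ⟨s, hs, rfl⟩⟩

lemma isCtrlSol_iff_coordSol {d m : ℕ} {T C_L : ℝ} (hT : 0 < T) (hCL : 0 < C_L)
    {K : ℝ → Matrix (Fin d) (Fin d) ℝ} (hKmeas : ∀ i j, Measurable fun t => K t i j)
    (hK : IntegrableOn (fun t => frobNorm (K t) ^ 2) (Ioc 0 T)) {x₀ : Fin d → ℝ}
    {b : ℝ → (Fin d → ℝ) → Fin d → ℝ}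
    {σ : ℝ → (Fin d → ℝ) → Matrix (Fin d) (Fin m) ℝ}
    (hbmeas : Measurable (Function.uncurry b))
    (hσmeas : ∀ i j, Measurable fun p : ℝ × (Fin d → ℝ) => σ p.1 p.2 i j)
    (hgrowth : ∀ t ∈ Icc (0:ℝ) T, ∀ x,
      euclNorm (b t x) + frobNorm (σ t x) ≤ C_L * (1 + euclNorm x))
    {φ : ℝ → Fin d → ℝ} {v : ℝ → Fin m → ℝ} (hφ : Continuous φ) (hv : Measurable v)
    (hvi : IntegrableOn (fun s => euclNorm (v s) ^ 2) (Ioc 0 T)) :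
    IsCtrlSol T K x₀ b σ v φ ↔ CoordSol T K x₀ b σ v φ := by
  obtain ⟨M, hM⟩ := exists_bound_of_continuous T hφ
  have hF : ∀ j, MemLp (fun s => (b s (φ s) + (σ s (φ s)).mulVec (v s)) j) 2
      (volume.restrict (Ioc 0 T)) := by
    intro j
    simp only [forcing_eq]
    exact (forcing_memLp hT hCL hbmeas hσmeas hgrowth hφ.measurable hv hvi hM j).1
  have key := fun t (ht : t ∈ Icc 0 T) => integral_mulVec_eq hKmeas hK hF ht
  simp only [forcing_eq] at key
  constructor
  · intro h t ht i
    have h1 := congrFun (h.2 t ht).2 i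
    rw [Pi.add_apply, (key t ht).2 i] at h1
    exact h1
  · intro h
    refine ⟨hφ.continuousOn, fun t ht => ⟨(key t ht).1, ?_⟩⟩
    ext i
    rw [Pi.add_apply, (key t ht).2 i]
    exact h t ht i

lemma IsCtrlSol.congr {d m : ℕ} {T : ℝ} {K : ℝ → Matrix (Fin d) (Fin d) ℝ}
    {x₀ : Fin d → ℝ} {b : ℝ → (Fin d → ℝ) → Fin d → ℝ}
    {σ : ℝ → (Fin d → ℝ) → Matrix (Fin d) (Fin m) ℝ}
    {v : ℝ → Fin m → ℝ} {φ ψ : ℝ → Fin d → ℝ} (h : IsCtrlSol T K x₀ b σ v φ)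
    (hψ : EqOn φ ψ (Icc 0 T)) : IsCtrlSol T K x₀ b σ v ψ := by
  refine ⟨h.1.congr hψ.symm, fun t ht => ?_⟩
  have he : EqOn (fun s => (K (t - s)).mulVec (b s (φ s) + (σ s (φ s)).mulVec (v s)))
      (fun s => (K (t - s)).mulVec (b s (ψ s) + (σ s (ψ s)).mulVec (v s))) (Ioc 0 t) := by
    intro s hs
    have : φ s = ψ s := hψ ⟨hs.1.le, hs.2.trans ht.2⟩
    simp only [this]
  refine ⟨(h.2 t ht).1.congr_fun he measurableSet_Ioc, ?_⟩
  rw [← hψ ht, (h.2 t ht).2, setIntegral_congr_fun measurableSet_Ioc he]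

/-- Solutions driven by controls of bounded energy are uniformly bounded. -/
lemma exists_apriori_bound {d m : ℕ} {T C_L : ℝ} (hT : 0 < T) (hCL : 0 < C_L)
    {K : ℝ → Matrix (Fin d) (Fin d) ℝ} (hKmeas : ∀ i j, Measurable fun t => K t i j)
    (hK : IntegrableOn (fun t => frobNorm (K t) ^ 2) (Ioc 0 T)) (x₀ : Fin d → ℝ)
    {b : ℝ → (Fin d → ℝ) → Fin d → ℝ}
    {σ : ℝ → (Fin d → ℝ) → Matrix (Fin d) (Fin m) ℝ}
    (hbmeas : Measurable (Function.uncurry b))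
    (hσmeas : ∀ i j, Measurable fun p : ℝ × (Fin d → ℝ) => σ p.1 p.2 i j)
    (hgrowth : ∀ t ∈ Icc (0:ℝ) T, ∀ x,
      euclNorm (b t x) + frobNorm (σ t x) ≤ C_L * (1 + euclNorm x)) (E : ℝ) :
    ∃ M : ℝ, ∀ (φ : ℝ → Fin d → ℝ) (v : ℝ → Fin m → ℝ), Continuous φ → Measurable v →
      IntegrableOn (fun s => euclNorm (v s) ^ 2) (Ioc 0 T) →
      ∫ s in Ioc 0 T, euclNorm (v s) ^ 2 ≤ E → CoordSol T K x₀ b σ v φ →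
      ∀ s ∈ Icc 0 T, 1 + euclNorm (φ s) ≤ M := by
  let k : ℝ → ℝ := fun s => ∑ i, ∑ j, |kerEntry T K i j s|
  have hk : MemLp k 2 volume := by
    refine memLp_finsetSum _ fun i _ => memLp_finsetSum _ fun j _ => ?_
    exact (kerEntry_memLp hKmeas hK i j).abs
  have hkpos : ∀ s, 0 ≤ k s := fun s =>
    Finset.sum_nonneg fun i _ => Finset.sum_nonneg fun j _ => abs_nonneg _
  have hk0 : ∀ s ≤ 0, k s = 0 := by
    intro s hs
    have : s ∉ Ioc 0 T := fun h => absurd h.1 (not_lt.2 hs)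
    simp [k, kerEntry, indicator_of_notMem this]
  obtain ⟨M, hM⟩ := exists_volterra_bound hT hk hkpos hk0 (A := 1 + ‖x₀‖)
    (C := C_L * (1 + d)) (R := √(2 * T + 2 * E)) (by positivity) (by positivity)
    (Real.sqrt_nonneg _)
  refine ⟨(1 + d) * M, fun φ v hφ hv hvi hE hsol s hs => ?_⟩
  obtain ⟨hq, hq2⟩ := one_add_euclNorm_memLp hT hv hvi
  have hqpos : ∀ s, 0 ≤ 1 + euclNorm (v s) := fun s => by linarith [euclNorm_nonneg (v s)]
  have hue : ∀ s, 1 + euclNorm (φ s) ≤ (1 + d) * (1 + ‖φ s‖) := by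
    intro s
    have h1 := euclNorm_le_card_mul_norm (φ s)
    have h2 := norm_nonneg (φ s)
    have h3 : (0 : ℝ) ≤ d := d.cast_nonneg
    nlinarith
  obtain ⟨M₁, hM₁⟩ := exists_bound_of_continuous T hφ
  have huq : MemLp (fun s => (1 + ‖φ s‖) * (1 + euclNorm (v s))) 2
      (volume.restrict (Ioc 0 T)) := by
    obtain ⟨M₂, hM₂⟩ := isCompact_Icc.bddAbove_image
      ((continuous_const.add hφ.norm).continuousOn (s := Icc 0 T) (f := fun s => 1 + ‖φ s‖))
    refine MemLp.of_le_mul (c := M₂) hq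
      ((continuous_const.add hφ.norm).aestronglyMeasurable.mul hq.1) ?_
    filter_upwards [ae_restrict_mem measurableSet_Ioc] with s hs
    rw [norm_mul, Real.norm_of_nonneg (show 0 ≤ 1 + ‖φ s‖ by positivity)]
    exact mul_le_mul_of_nonneg_right (hM₂ ⟨s, Ioc_subset_Icc_self hs, rfl⟩) (norm_nonneg _)
  refine (hue s).trans (mul_le_mul_of_nonneg_left
    (hM (fun s => 1 + ‖φ s‖) (fun s => 1 + euclNorm (v s)) (by fun_prop) (fun t => by positivity)
      hqpos hq (Real.sqrt_le_sqrt (by linarith)) ?_ s hs) (by positivity))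
  intro t ht
  have hI0 : 0 ≤ ∫ s in Ioc 0 T, k (t - s) * ((1 + ‖φ s‖) * (1 + euclNorm (v s))) :=
    integral_nonneg fun s => mul_nonneg (hkpos _) (mul_nonneg (by positivity) (hqpos s))
  have hnorm : ‖φ t‖ ≤ ‖x₀‖ + C_L * (1 + d) *
      ∫ s in Ioc 0 T, k (t - s) * ((1 + ‖φ s‖) * (1 + euclNorm (v s))) := by
    refine (pi_norm_le_iff_of_nonneg (by positivity)).2 fun i => ?_
    rw [hsol t ht i]
    refine (norm_add_le _ _).trans (add_le_add (norm_le_pi_norm x₀ i) ?_)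
    have hint : ∀ j, Integrable (fun s => kerEntry T K i j (t - s) * forcing b σ φ v j s)
        (volume.restrict (Ioc 0 T)) := fun j =>
      ((memLp_comp_sub (kerEntry_memLp hKmeas hK i j) t).restrict _).integrable_mul
        (forcing_memLp hT hCL hbmeas hσmeas hgrowth hφ.measurable hv hvi hM₁ j).1
    have hint2 : Integrable (fun s => k (t - s) * ((1 + ‖φ s‖) * (1 + euclNorm (v s))))
        (volume.restrict (Ioc 0 T)) :=
      ((memLp_comp_sub hk t).restrict _).integrable_mul huq
    rw [← integral_finsetSum _ fun j _ => hint j, ← integral_const_mul]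
    refine norm_integral_le_of_norm_le (hint2.const_mul _) ?_
    filter_upwards [ae_restrict_mem measurableSet_Ioc] with s hs
    have hf : ∀ j, |forcing b σ φ v j s| ≤
        C_L * (1 + d) * ((1 + ‖φ s‖) * (1 + euclNorm (v s))) := by
      intro j
      refine (abs_forcing_le hgrowth φ v j (Ioc_subset_Icc_self hs)).trans ?_
      have := mul_le_mul_of_nonneg_right (mul_le_mul_of_nonneg_left (hue s) hCL.le) (hqpos s)
      linarith
    have hpos : 0 ≤ C_L * (1 + d) * ((1 + ‖φ s‖) * (1 + euclNorm (v s))) :=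
      mul_nonneg (by positivity) (mul_nonneg (by positivity) (hqpos s))
    calc ‖∑ j, kerEntry T K i j (t - s) * forcing b σ φ v j s‖
        ≤ ∑ j, |kerEntry T K i j (t - s)| *
            (C_L * (1 + d) * ((1 + ‖φ s‖) * (1 + euclNorm (v s)))) := by
          refine (norm_sum_le _ _).trans (Finset.sum_le_sum fun j _ => ?_)
          rw [Real.norm_eq_abs, abs_mul]
          exact mul_le_mul_of_nonneg_left (hf j) (abs_nonneg _)
      _ = (∑ j, |kerEntry T K i j (t - s)|) *
            (C_L * (1 + d) * ((1 + ‖φ s‖) * (1 + euclNorm (v s)))) := by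
          rw [Finset.sum_mul]
      _ ≤ k (t - s) * (C_L * (1 + d) * ((1 + ‖φ s‖) * (1 + euclNorm (v s)))) := by
          refine mul_le_mul_of_nonneg_right ?_ hpos
          exact Finset.single_le_sum (f := fun i => ∑ j, |kerEntry T K i j (t - s)|)
            (fun _ _ => Finset.sum_nonneg fun _ _ => abs_nonneg _) (Finset.mem_univ i)
      _ = _ := by ring
  linarith

lemma control_coord_memLp {m : ℕ} {μ : Measure ℝ} {v : ℝ → Fin m → ℝ} (hv : Measurable v)
    (hvi : Integrable (fun s => euclNorm (v s) ^ 2) μ) (k : Fin m) :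
    MemLp (fun s => v s k) 2 μ ∧ ∫ s, v s k ^ 2 ∂μ ≤ ∫ s, euclNorm (v s) ^ 2 ∂μ := by
  have hm : Measurable fun s => v s k := (measurable_pi_apply k).comp hv
  have hle : ∀ s, v s k ^ 2 ≤ euclNorm (v s) ^ 2 := fun s => by
    rw [← sq_abs]; exact pow_le_pow_left₀ (abs_nonneg _) (abs_apply_le_euclNorm _ k) 2
  have hi : Integrable (fun s => v s k ^ 2) μ :=
    Integrable.mono' hvi (hm.pow_const 2).aestronglyMeasurable (Eventually.of_forall fun s => by
      rw [Real.norm_of_nonneg (sq_nonneg _)]; exact hle s)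
  exact ⟨(memLp_two_iff_integrable_sq hm.aestronglyMeasurable).2 hi, integral_mono hi hvi hle⟩

/-- Splits the integral of the forcing into the pieces to which weak-strong convergence applies; the
drift is paired with the constant control `1`. -/
lemma integral_ker_forcing_eq {d m : ℕ} {T C : ℝ} {p : ℝ → ℝ}
    (hp : MemLp p 2 (volume.restrict (Ioc 0 T)))
    {b : ℝ → (Fin d → ℝ) → Fin d → ℝ}
    {σ : ℝ → (Fin d → ℝ) → Matrix (Fin d) (Fin m) ℝ}
    {φ : ℝ → Fin d → ℝ} {v : ℝ → Fin m → ℝ} (j : Fin d)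
    (hb : Measurable fun s => b s (φ s) j) (hσ : ∀ k, Measurable fun s => σ s (φ s) j k)
    (hbC : ∀ s ∈ Icc 0 T, |b s (φ s) j| ≤ C) (hσC : ∀ k, ∀ s ∈ Icc 0 T, |σ s (φ s) j k| ≤ C)
    (hv : Measurable v) (hvi : IntegrableOn (fun s => euclNorm (v s) ^ 2) (Ioc 0 T)) :
    ∫ s in Ioc 0 T, p s * forcing b σ φ v j s =
      (∫ s in Ioc 0 T, p s * (b s (φ s) j * 1)) +
        ∑ k, ∫ s in Ioc 0 T, p s * (σ s (φ s) j k * v s k) := by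
  have aux : ∀ a w : ℝ → ℝ, Measurable a → (∀ s ∈ Icc 0 T, |a s| ≤ C) →
      MemLp w 2 (volume.restrict (Ioc 0 T)) →
      Integrable (fun s => p s * (a s * w s)) (volume.restrict (Ioc 0 T)) := by
    intro a w ha haC hw
    refine hp.integrable_mul (MemLp.of_le_mul (c := C) hw (ha.aestronglyMeasurable.mul hw.1) ?_)
    filter_upwards [ae_restrict_mem measurableSet_Ioc] with s hs
    rw [norm_mul]
    exact mul_le_mul_of_nonneg_right (haC s (Ioc_subset_Icc_self hs)) (norm_nonneg _)
  have h1 := aux _ (fun _ => 1) hb hbC (memLp_const 1)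
  have h2 := fun k => aux _ (fun s => v s k) (hσ k) (hσC k) (control_coord_memLp hv hvi k).1
  rw [← integral_finsetSum _ fun k _ => h2 k,
    ← integral_add h1 (integrable_finsetSum _ fun k _ => h2 k)]
  congr 1
  ext s
  simp [forcing, mul_add, Finset.mul_sum]

/-! ### Compactness of the reachable set -/

/-- Paths (extended to `ℝ` by constants) that solve the controlled equation with a control satisfying
`∫₀ᵀ |v|² ≤ E`. -/
def reachable {d m : ℕ} {T : ℝ} (hT : 0 < T) (K : ℝ → Matrix (Fin d) (Fin d) ℝ)
    (x₀ : Fin d → ℝ) (b : ℝ → (Fin d → ℝ) → Fin d → ℝ)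
    (σ : ℝ → (Fin d → ℝ) → Matrix (Fin d) (Fin m) ℝ) (E : ℝ) :
    Set C(Icc (0:ℝ) T, Fin d → ℝ) :=
  {Φ | ∃ v : ℝ → Fin m → ℝ, Measurable v ∧
    IntegrableOn (fun s => euclNorm (v s) ^ 2) (Ioc 0 T) ∧
    ∫ s in Ioc 0 T, euclNorm (v s) ^ 2 ≤ E ∧ CoordSol T K x₀ b σ v (IccExtend hT.le Φ)}

/-- Relative compactness of the reachable set, by Arzelà–Ascoli: the modulus of continuity `ω` is governed
by the `L²` modulus of continuity of translates of the kernel. -/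
lemma reachable_subset_isCompact {d m : ℕ} {T C_L : ℝ} (hT : 0 < T) (hCL : 0 < C_L)
    {K : ℝ → Matrix (Fin d) (Fin d) ℝ} (hKmeas : ∀ i j, Measurable fun t => K t i j)
    (hK : IntegrableOn (fun t => frobNorm (K t) ^ 2) (Ioc 0 T)) (x₀ : Fin d → ℝ)
    {b : ℝ → (Fin d → ℝ) → Fin d → ℝ}
    {σ : ℝ → (Fin d → ℝ) → Matrix (Fin d) (Fin m) ℝ}
    (hbmeas : Measurable (Function.uncurry b))
    (hσmeas : ∀ i j, Measurable fun p : ℝ × (Fin d → ℝ) => σ p.1 p.2 i j)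
    (hgrowth : ∀ t ∈ Icc (0:ℝ) T, ∀ x,
      euclNorm (b t x) + frobNorm (σ t x) ≤ C_L * (1 + euclNorm x)) (E : ℝ) :
    ∃ Q, IsCompact Q ∧ reachable hT K x₀ b σ E ⊆ Q := by
  obtain ⟨M, hM⟩ := exists_apriori_bound hT hCL hKmeas hK x₀ hbmeas hσmeas hgrowth E
  have hext : ∀ Φ : C(Icc (0:ℝ) T, Fin d → ℝ), ∀ t : Icc (0:ℝ) T,
      IccExtend hT.le Φ t = Φ t := fun Φ t => IccExtend_val _ _ t
  refine subset_isCompact_of_equicontinuous _ M ?_ ?_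
  · rintro Φ ⟨v, hv, hvi, hE, hsol⟩ t
    have h := hM _ v (Φ.continuous.Icc_extend') hv hvi hE hsol t t.2
    rw [hext] at h
    have h0 : 0 ≤ M := by linarith [euclNorm_nonneg (Φ t)]
    refine (pi_norm_le_iff_of_nonneg h0).2 fun i => ?_
    have := abs_apply_le_euclNorm (Φ t) i
    rw [Real.norm_eq_abs]
    linarith
  · intro t₀ ε hε
    set B := (C_L * M) ^ 2 * (2 * T + 2 * E)
    let ω : Fin d → ℝ → ℝ := fun i t =>
      ∑ j, √(∫ s, (kerEntry T K i j (t - s) - kerEntry T K i j (t₀ - s)) ^ 2) * √B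
    have hω : ∀ i, ∀ᶠ t : Icc (0:ℝ) T in 𝓝 t₀, ω i t < ε := by
      intro i
      have h1 : Tendsto (ω i) (𝓝 (t₀ : ℝ)) (𝓝 (∑ _j : Fin d, √0 * √B)) :=
        tendsto_finsetSum _ fun j _ =>
          (tendsto_integral_sq_translate (kerEntry_memLp hKmeas hK i j) t₀).sqrt.mul_const _
      have h2 := h1.comp (continuous_subtype_val.tendsto t₀)
      simp only [Real.sqrt_zero, zero_mul, Finset.sum_const_zero] at h2
      exact h2.eventually (gt_mem_nhds hε)
    filter_upwards [eventually_all.2 hω] with t ht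
    rintro Φ ⟨v, hv, hvi, hE, hsol⟩
    rw [dist_comm, dist_pi_lt_iff hε]
    intro i
    refine lt_of_le_of_lt ?_ (ht i)
    have hF := forcing_memLp hT hCL hbmeas hσmeas hgrowth
      (Φ.continuous.Icc_extend').measurable hv hvi
      (hM _ v (Φ.continuous.Icc_extend') hv hvi hE hsol)
    have hFB : ∀ j, √(∫ s in Ioc 0 T, forcing b σ (IccExtend hT.le Φ) v j s ^ 2) ≤ √B := by
      intro j
      refine Real.sqrt_le_sqrt ((hF j).2.trans ?_)
      exact mul_le_mul_of_nonneg_left (by linarith) (sq_nonneg _)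
    have hk := fun j (t : ℝ) => memLp_comp_sub (kerEntry_memLp hKmeas hK i j) t
    rw [Real.dist_eq, ← hext, ← hext, hsol t t.2 i, hsol t₀ t₀.2 i, add_sub_add_left_eq_sub,
      ← Finset.sum_sub_distrib]
    refine (Finset.abs_sum_le_sum_abs _ _).trans (Finset.sum_le_sum fun j _ => ?_)
    have hd := (hk j t).sub (hk j t₀)
    have hint : ∀ r, Integrable (fun s => kerEntry T K i j (r - s) *
        forcing b σ (IccExtend hT.le Φ) v j s) (volume.restrict (Ioc 0 T)) :=
      fun r => ((hk j r).restrict _).integrable_mul (hF j).1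
    rw [← integral_sub (hint t) (hint t₀)]
    simp only [← sub_mul]
    refine (abs_integral_mul_le_sqrt (hd.restrict _) (hF j).1).trans
      (mul_le_mul (Real.sqrt_le_sqrt ?_) (hFB j) (Real.sqrt_nonneg _) (Real.sqrt_nonneg _))
    exact setIntegral_le_integral hd.integrable_sq (Eventually.of_forall fun s => sq_nonneg _)

/-- Every ultrafilter on the reachable set converges inside it: the limit path solves the equation driven
by the weak limit of the controls. -/
lemma isCompact_reachable {d m : ℕ} {T C_L : ℝ} (hT : 0 < T) (hCL : 0 < C_L)
    {K : ℝ → Matrix (Fin d) (Fin d) ℝ} (hKmeas : ∀ i j, Measurable fun t => K t i j)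
    (hK : IntegrableOn (fun t => frobNorm (K t) ^ 2) (Ioc 0 T)) (x₀ : Fin d → ℝ)
    {b : ℝ → (Fin d → ℝ) → Fin d → ℝ}
    {σ : ℝ → (Fin d → ℝ) → Matrix (Fin d) (Fin m) ℝ}
    (hbmeas : Measurable (Function.uncurry b))
    (hσmeas : ∀ i j, Measurable fun p : ℝ × (Fin d → ℝ) => σ p.1 p.2 i j)
    (hucont : ∀ M > (0:ℝ), ∀ ε > (0:ℝ), ∃ δ > (0:ℝ), ∀ t ∈ Icc (0:ℝ) T, ∀ x y : Fin d → ℝ,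
      euclNorm x ≤ M → euclNorm y ≤ M → euclNorm (x - y) ≤ δ →
      euclNorm (b t x - b t y) + frobNorm (σ t x - σ t y) ≤ ε)
    (hgrowth : ∀ t ∈ Icc (0:ℝ) T, ∀ x,
      euclNorm (b t x) + frobNorm (σ t x) ≤ C_L * (1 + euclNorm x)) {E : ℝ} (hE0 : 0 ≤ E) :
    IsCompact (reachable hT K x₀ b σ E) := by
  obtain ⟨Q, hQ, hSQ⟩ :=
    reachable_subset_isCompact hT hCL hKmeas hK x₀ hbmeas hσmeas hgrowth E
  rw [isCompact_iff_ultrafilter_le_nhds]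
  intro U hU
  obtain ⟨Φ₀, -, hΦ₀⟩ := hQ.ultrafilter_le_nhds U (hU.trans (principal_mono.2 hSQ))
  have hex : ∀ Φ : C(Icc (0:ℝ) T, Fin d → ℝ), ∃ v : ℝ → Fin m → ℝ, Measurable v ∧
      IntegrableOn (fun s => euclNorm (v s) ^ 2) (Ioc 0 T) ∧
      ∫ s in Ioc 0 T, euclNorm (v s) ^ 2 ≤ E ∧
      (Φ ∈ reachable hT K x₀ b σ E → CoordSol T K x₀ b σ v (IccExtend hT.le Φ)) := by
    intro Φ
    by_cases h : Φ ∈ reachable hT K x₀ b σ E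
    · obtain ⟨v, h1, h2, h3, h4⟩ := h
      exact ⟨v, h1, h2, h3, fun _ => h4⟩
    · refine ⟨fun _ => 0, measurable_const, ?_, ?_, fun h' => absurd h' h⟩
      · simp [euclNorm]
      · simpa [euclNorm] using hE0
  choose V hV hVi hVE hVsol using hex
  obtain ⟨v, hv, hvi, hvE, hweak⟩ := exists_weak_limit U V hV hVi hVE
  refine ⟨Φ₀, ⟨v, hv, hvi, hvE, ?_⟩, hΦ₀⟩
  have hcont : ∀ Φ : C(Icc (0:ℝ) T, Fin d → ℝ), Continuous (IccExtend hT.le Φ) :=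
    fun Φ => Φ.continuous.Icc_extend'
  have hbm : ∀ (Φ : C(Icc (0:ℝ) T, Fin d → ℝ)) j, Measurable fun s => b s (IccExtend hT.le Φ s) j :=
    fun Φ j => (measurable_pi_apply j).comp
      (hbmeas.comp (measurable_id.prodMk (hcont Φ).measurable))
  have hσm : ∀ (Φ : C(Icc (0:ℝ) T, Fin d → ℝ)) j k,
      Measurable fun s => σ s (IccExtend hT.le Φ s) j k :=
    fun Φ j k => (hσmeas j k).comp (measurable_id.prodMk (hcont Φ).measurable)
  have hbd : ∀ Φ : C(Icc (0:ℝ) T, Fin d → ℝ), ∃ C, ∀ s ∈ Icc 0 T,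
      (∀ j, |b s (IccExtend hT.le Φ s) j| ≤ C) ∧ ∀ j k, |σ s (IccExtend hT.le Φ s) j k| ≤ C := by
    intro Φ
    obtain ⟨M, hM⟩ := exists_bound_of_continuous T (hcont Φ)
    refine ⟨C_L * M, fun s hs => ?_⟩
    have h1 := (hgrowth s hs (IccExtend hT.le Φ s)).trans
      (mul_le_mul_of_nonneg_left (hM s hs) hCL.le)
    have h2 := euclNorm_nonneg (b s (IccExtend hT.le Φ s))
    have h3 := frobNorm_nonneg (σ s (IccExtend hT.le Φ s))
    exact ⟨fun j => (abs_apply_le_euclNorm _ j).trans (by linarith),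
      fun j k => (abs_entry_le_frobNorm _ j k).trans (by linarith)⟩
  have hunif : ∀ ε > 0, ∀ᶠ Φ : C(Icc (0:ℝ) T, Fin d → ℝ) in U, ∀ s ∈ Icc 0 T,
      (∀ j, |b s (IccExtend hT.le Φ s) j - b s (IccExtend hT.le Φ₀ s) j| ≤ ε) ∧
      ∀ j k, |σ s (IccExtend hT.le Φ s) j k - σ s (IccExtend hT.le Φ₀ s) j k| ≤ ε := by
    intro ε hε
    obtain ⟨δ, hδ, H⟩ := hucont (d * (‖Φ₀‖ + 1) + 1) (by positivity) ε hε
    have hη : 0 < min 1 (δ / (d + 1)) := lt_min one_pos (by positivity)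
    filter_upwards [hΦ₀ (Metric.ball_mem_nhds Φ₀ hη)] with Φ hΦ s hs
    rw [Metric.mem_ball, dist_eq_norm] at hΦ
    have hn : ∀ Ψ : C(Icc (0:ℝ) T, Fin d → ℝ), euclNorm (IccExtend hT.le Ψ s) ≤ d * ‖Ψ‖ :=
      fun Ψ => (euclNorm_le_card_mul_norm _).trans
        (mul_le_mul_of_nonneg_left (Ψ.norm_coe_le_norm _) d.cast_nonneg)
    have hd0 : (0 : ℝ) ≤ d := d.cast_nonneg
    have hΦn : ‖Φ‖ ≤ ‖Φ₀‖ + 1 := by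
      have h1 := norm_le_norm_add_norm_sub' Φ Φ₀
      have h2 := hΦ.le.trans (min_le_left _ _)
      linarith
    have hdiff : euclNorm (IccExtend hT.le Φ s - IccExtend hT.le Φ₀ s) ≤ δ := by
      calc euclNorm (IccExtend hT.le Φ s - IccExtend hT.le Φ₀ s) ≤ d * ‖Φ - Φ₀‖ := hn (Φ - Φ₀)
        _ ≤ d * (δ / (d + 1)) :=
          mul_le_mul_of_nonneg_left (hΦ.le.trans (min_le_right _ _)) hd0
        _ = δ * (d / (d + 1)) := by ring
        _ ≤ δ := mul_le_of_le_one_right hδ.le (by rw [div_le_one (by positivity)]; linarith)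
    have h := H s hs (IccExtend hT.le Φ s) (IccExtend hT.le Φ₀ s)
      ((hn Φ).trans (by nlinarith)) ((hn Φ₀).trans (by nlinarith)) hdiff
    have h2 := euclNorm_nonneg (b s (IccExtend hT.le Φ s) - b s (IccExtend hT.le Φ₀ s))
    have h3 := frobNorm_nonneg (σ s (IccExtend hT.le Φ s) - σ s (IccExtend hT.le Φ₀ s))
    exact ⟨fun j => (abs_apply_le_euclNorm (b s _ - b s _) j).trans (by linarith),
      fun j k => (abs_entry_le_frobNorm (σ s _ - σ s _) j k).trans (by linarith)⟩
  have haeIcc : ∀ᵐ s ∂(volume.restrict (Ioc 0 T)), s ∈ Icc 0 T := by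
    filter_upwards [ae_restrict_mem measurableSet_Ioc] with s hs using Ioc_subset_Icc_self hs
  obtain ⟨C₀, hC₀⟩ := hbd Φ₀
  intro t ht i
  have hp : ∀ j, MemLp (fun s => kerEntry T K i j (t - s)) 2 (volume.restrict (Ioc 0 T)) :=
    fun j => (memLp_comp_sub (kerEntry_memLp hKmeas hK i j) t).restrict _
  have hsplit : ∀ (Φ : C(Icc (0:ℝ) T, Fin d → ℝ)) (w : ℝ → Fin m → ℝ) (j : Fin d), Measurable w →
      IntegrableOn (fun s => euclNorm (w s) ^ 2) (Ioc 0 T) →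
      ∫ s in Ioc 0 T, kerEntry T K i j (t - s) * forcing b σ (IccExtend hT.le Φ) w j s =
        (∫ s in Ioc 0 T, kerEntry T K i j (t - s) * (b s (IccExtend hT.le Φ s) j * 1)) +
        ∑ k, ∫ s in Ioc 0 T,
          kerEntry T K i j (t - s) * (σ s (IccExtend hT.le Φ s) j k * w s k) := by
    intro Φ w j hw hwi
    obtain ⟨C, hC⟩ := hbd Φ
    exact integral_ker_forcing_eq (hp j) j (hbm Φ j) (hσm Φ j) (fun s hs => (hC s hs).1 j)
      (fun k s hs => (hC s hs).2 j k) hw hwi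
  have hlim : Tendsto (fun Φ : C(Icc (0:ℝ) T, Fin d → ℝ) => x₀ i + ∑ j, ∫ s in Ioc 0 T,
      kerEntry T K i j (t - s) * forcing b σ (IccExtend hT.le Φ) (V Φ) j s) U
      (𝓝 (x₀ i + ∑ j, ∫ s in Ioc 0 T,
        kerEntry T K i j (t - s) * forcing b σ (IccExtend hT.le Φ₀) v j s)) := by
    simp only [hsplit _ _ _ (hV _) (hVi _), hsplit _ _ _ hv hvi]
    refine tendsto_const_nhds.add (tendsto_finsetSum _ fun j _ => Tendsto.add ?_
      (tendsto_finsetSum _ fun k _ => ?_))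
    · refine tendsto_integral_weak_strong (hp j) (fun Φ => hbm Φ j) (hbm Φ₀ j) (C := C₀)
        ?_ ?_ (w := fun _ _ => 1) (w₀ := fun _ => 1) (fun _ => memLp_const 1)
        (fun _ => le_rfl) (fun g _ => tendsto_const_nhds)
      · filter_upwards [haeIcc] with s hs using (hC₀ s hs).1 j
      · intro ε hε
        filter_upwards [hunif ε hε] with Φ hΦ
        filter_upwards [haeIcc] with s hs using (hΦ s hs).1 j
    · refine tendsto_integral_weak_strong (hp j) (fun Φ => hσm Φ j k) (hσm Φ₀ j k) (C := C₀)
        ?_ ?_ (w := fun Φ s => V Φ s k) (w₀ := fun s => v s k) (R := E)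
        (fun Φ => (control_coord_memLp (hV Φ) (hVi Φ) k).1)
        (fun Φ => (control_coord_memLp (hV Φ) (hVi Φ) k).2.trans (hVE Φ)) (hweak k)
      · filter_upwards [haeIcc] with s hs using (hC₀ s hs).2 j k
      · intro ε hε
        filter_upwards [hunif ε hε] with Φ hΦ
        filter_upwards [haeIcc] with s hs using (hΦ s hs).2 j k
  have hleft : Tendsto (fun Φ : C(Icc (0:ℝ) T, Fin d → ℝ) => IccExtend hT.le Φ t i) U
      (𝓝 (IccExtend hT.le Φ₀ t i)) := by
    have hc : Continuous fun Φ : C(Icc (0:ℝ) T, Fin d → ℝ) => Φ (projIcc 0 T hT.le t) i :=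
      (continuous_apply i).comp (continuous_eval_const _)
    exact (hc.tendsto Φ₀).mono_left hΦ₀
  refine tendsto_nhds_unique (hleft.congr' ?_) hlim
  filter_upwards [hU (mem_principal_self _)] with Φ hΦ
  exact hVsol Φ hΦ t ht i

/-- **Compactness of the sublevel sets of the large deviations rate function.**
Under Assumption (K), uniform continuity in space and linear growth of the coefficients,
every sublevel set `{φ : I(φ) ≤ N}`, `N > 0`, is compact in `C([0,T];ℝᵈ)`. -/
theorem rate_function_compact_sublevels
    (d m : ℕ) (T : ℝ) (hT : 0 < T)
    (γ : ℝ) (hγ : γ ∈ Ioc (0:ℝ) 2)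
    (K : ℝ → Matrix (Fin d) (Fin d) ℝ)
    (hKmeas : ∀ i j, Measurable fun t => K t i j)
    (hK : AssumptionK T γ K)
    (x₀ : Fin d → ℝ)
    (b : ℝ → (Fin d → ℝ) → Fin d → ℝ)
    (σ : ℝ → (Fin d → ℝ) → Matrix (Fin d) (Fin m) ℝ)
    (hbmeas : Measurable (Function.uncurry b))
    (hσmeas : ∀ i j, Measurable fun p : ℝ × (Fin d → ℝ) => σ p.1 p.2 i j)
    (hucont : ∀ M > (0:ℝ), ∀ ε > (0:ℝ), ∃ δ > (0:ℝ), ∀ t ∈ Icc (0:ℝ) T, ∀ x y : Fin d → ℝ,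
      euclNorm x ≤ M → euclNorm y ≤ M → euclNorm (x - y) ≤ δ →
      euclNorm (b t x - b t y) + frobNorm (σ t x - σ t y) ≤ ε)
    (C_L : ℝ) (hCL : 0 < C_L)
    (hgrowth : ∀ t ∈ Icc (0:ℝ) T, ∀ x,
      euclNorm (b t x) + frobNorm (σ t x) ≤ C_L * (1 + euclNorm x))
    (N : ℝ) (hN : 0 < N) :
    IsCompact {Φ : ContinuousMap (Icc (0:ℝ) T) (Fin d → ℝ) |
      rateI m T K x₀ b σ Φ ≤ ENNReal.ofReal N} := by
  have hKi := hK.1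
  have hcomp : ∀ E, 0 ≤ E → IsCompact (reachable hT K x₀ b σ E) := fun E hE =>
    isCompact_reachable hT hCL hKmeas hKi x₀ hbmeas hσmeas hucont hgrowth hE
  have hset : {Φ : ContinuousMap (Icc (0:ℝ) T) (Fin d → ℝ) |
      rateI m T K x₀ b σ Φ ≤ ENNReal.ofReal N} =
      ⋂ ε : {ε : ℝ // 0 < ε}, reachable hT K x₀ b σ (2 * (N + ε)) := by
    ext Φ
    have hΦc : Continuous (IccExtend hT.le Φ) := Φ.continuous.Icc_extend'
    have hΦe : ∀ x : Icc (0:ℝ) T, IccExtend hT.le Φ x = Φ x := fun x => IccExtend_val _ _ x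
    rw [mem_ofPred_eq, mem_iInter]
    constructor
    · rintro h ⟨ε, hε⟩
      have hlt : rateI m T K x₀ b σ Φ < ENNReal.ofReal (N + ε) :=
        h.trans_lt ((ENNReal.ofReal_lt_ofReal_iff (by linarith)).2 (by linarith))
      obtain ⟨_, ⟨φ, v, hv, hvi, hsol, hφ, rfl⟩, hlt'⟩ := sInf_lt_iff.1 hlt
      have hlt'' := (ENNReal.ofReal_lt_ofReal_iff (by linarith)).1 hlt'
      refine ⟨v, hv, hvi, by linarith,
        (isCtrlSol_iff_coordSol hT hCL hKmeas hKi hbmeas hσmeas hgrowth hΦc hv hvi).1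
          (hsol.congr fun t ht => ?_)⟩
      rw [← hφ ⟨t, ht⟩, ← hΦe ⟨t, ht⟩]
    · intro h
      refine ENNReal.le_of_forall_pos_le_add fun ε hε _ => ?_
      obtain ⟨v, hv, hvi, hE, hsol⟩ := h ⟨ε, hε⟩
      have hle : rateI m T K x₀ b σ Φ ≤
          ENNReal.ofReal (2⁻¹ * ∫ s in Ioc 0 T, euclNorm (v s) ^ 2) :=
        sInf_le ⟨IccExtend hT.le Φ, v, hv, hvi,
          (isCtrlSol_iff_coordSol hT hCL hKmeas hKi hbmeas hσmeas hgrowth hΦc hv hvi).2 hsol,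
          fun x => (hΦe x).symm, rfl⟩
      refine hle.trans ?_
      rw [← ENNReal.ofReal_coe_nnreal, ← ENNReal.ofReal_add hN.le ε.coe_nonneg]
      apply ENNReal.ofReal_le_ofReal
      linarith
  rw [hset]
  refine (hcomp (2 * (N + 1)) (by linarith)).of_isClosed_subset (isClosed_iInter fun ε => ?_)
    (iInter_subset _ (⟨1, one_pos⟩ : {ε : ℝ // 0 < ε}))
  exact (hcomp _ (by linarith [ε.2])).isClosed
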